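/- ℘(ϖ/3) = 1 for the Weierstrass ℘-function with ℘'² = 4℘³ − 1 and real period ϖ; equivalently, ∫_1^∞ dx/√(4x³ − 1) = ϖ/3 = Γ(1/3)³/(6π). -/

import Mathlib

open Complex

noncomputable section

/-- `e^{πi/3}`. -/
def τ : ℂ := Complex.exp (Real.pi * Complex.I / 3)

/-- The point `mϖ + n e^{πi/3} ϖ` of the hexagonal lattice with real period `ϖ`. -/
def hexPt (ϖ : ℝ) (p : ℤ × ℤ) : ℂ := p.1 * ϖ + p.2 * τ * ϖ

/-- The hexagonal lattice `𝕋 = ℤϖ + ℤ e^{πi/3} ϖ`. -/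
def hexLattice (ϖ : ℝ) : Set ℂ := Set.range (hexPt ϖ)

/-- The real fundamental period `ϖ = Γ(1/3)³/(2π)`. -/
def ϖ₀ : ℝ := (Real.Gamma (1/3))^3 / (2 * Real.pi)

/-- The Weierstrass `℘`-function of the hexagonal lattice `𝕋 = ℤϖ₀ + ℤ e^{πi/3} ϖ₀`,
i.e. the `℘`-function with invariants `g₂ = 0`, `g₃ = 1`. -/
def wp (z : ℂ) : ℂ :=
  1 / z ^ 2 + ∑' p : {p : ℤ × ℤ // p ≠ 0}, (1 / (z - hexPt ϖ₀ p) ^ 2 - 1 / (hexPt ϖ₀ p) ^ 2)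

/-- The Weierstrass `σ`-function of the hexagonal lattice with real period `ϖ`. -/
def wSigma (ϖ : ℝ) (z : ℂ) : ℂ :=
  z * ∏' p : {p : ℤ × ℤ // p ≠ 0},
    ((1 - z / hexPt ϖ p) * Complex.exp (z / hexPt ϖ p + z ^ 2 / (2 * (hexPt ϖ p) ^ 2)))

/-- The Weierstrass `ζ`-function of the hexagonal lattice with real period `ϖ`. -/
def wZeta (ϖ : ℝ) (z : ℂ) : ℂ :=
  1 / z + ∑' p : {p : ℤ × ℤ // p ≠ 0},
    (1 / (z - hexPt ϖ p) + 1 / hexPt ϖ p + z / (hexPt ϖ p) ^ 2)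

/-!
The pair `(℘, ℘')` is injective modulo the lattice, because `℘` solves the second-order equation
`℘'' = 6 ℘² - g₂ / 2`. For a lattice stable under conjugation and with no points in `(0, ω)`, it
follows that `℘` is injective on `(0, ω / 2]`, and the substitution `x = ℘(t)` gives
`∫_{℘(z)}^∞ dx / √(4x³ - g₂ x - g₃) = z` for `0 < z ≤ ω / 2`.

For the hexagonal lattice of real period `ω`, the symmetry `z ↦ e^{πi/3} z` forces `g₂ = 0` and
`℘ ≠ 0` on the real line, so that `e = ℘(ω / 2) > 0` and `g₃ = 4e³`. The integral from `e` is a beta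
integral, and comparing its value with `ω / 2` gives `g₃ = (ϖ₀ / ω)⁶`. The duplication map of the
curve `y² = 4x³ - 4e³` sends `(e, c)` onto `(c, ∞)`, where `c³ = 4e³`, and doubles `dx / y`; so the
integral from `c` is two thirds of the integral from `e`, namely `ω / 3`, and `℘(ω / 3) = c`.
-/

open MeasureTheory Set Filter Topology
open scoped ComplexConjugate PeriodPair

section ChangeOfVariables

variable {f f' : ℝ → ℝ} {a b : ℝ}

lemma image_Ioo_eq_Ioi_of_tendsto_atTop (hab : a < b) (hf : ContinuousOn f (Ioc a b))
    (hinj : InjOn f (Ioc a b)) (htop : Tendsto f (𝓝[>] a) atTop) :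
    f '' Ioo a b = Ioi (f b) := by
  have : (𝓝[>] a).NeBot := inferInstance
  have hsurj {t : ℝ} (ht : t ∈ Ioc a b) : Ici (f t) ⊆ f '' Ioc a t := by
    refine isPreconnected_Ioc.intermediate_value_Ici (right_mem_Ioc.2 ht.1) ?_
      (hf.mono (Ioc_subset_Ioc_right ht.2)) htop
    exact le_principal_iff.2 (Ioc_mem_nhdsGT ht.1)
  refine Subset.antisymm ?_ fun y hy => ?_
  · rintro _ ⟨t, ht, rfl⟩
    by_contra hle
    obtain ⟨s, hs, hsb⟩ := hsurj (Ioo_subset_Ioc_self ht) (mem_Ici.2 (not_lt.1 hle))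
    have hsb' : s = b :=
      hinj ⟨hs.1, hs.2.trans ht.2.le⟩ (right_mem_Ioc.2 hab) hsb
    exact (hs.2.trans_lt ht.2).ne hsb'
  · obtain ⟨t, ht, rfl⟩ := hsurj (right_mem_Ioc.2 hab) (Ioi_subset_Ici_self hy)
    exact ⟨t, ⟨ht.1, ht.2.lt_of_ne (by rintro rfl; exact lt_irrefl (f t) hy)⟩, rfl⟩

lemma integral_Ioi_comp_of_tendsto_atTop (hab : a < b) (hf : ContinuousOn f (Ioc a b))
    (hinj : InjOn f (Ioc a b)) (htop : Tendsto f (𝓝[>] a) atTop)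
    (hf' : ∀ t ∈ Ioo a b, HasDerivAt f (f' t) t) (g : ℝ → ℝ) :
    ∫ x in Ioi (f b), g x = ∫ t in Ioo a b, |f' t| * g (f t) := by
  rw [← image_Ioo_eq_Ioi_of_tendsto_atTop hab hf hinj htop]
  exact integral_image_eq_integral_abs_deriv_smul measurableSet_Ioo
    (fun t ht => (hf' t ht).hasDerivWithinAt) (hinj.mono Ioo_subset_Ioc_self) g

end ChangeOfVariables

section BetaIntegral

lemma integral_Ioo_rpow_mul_one_sub_rpow {a b : ℝ} (ha : 0 < a) (hb : 0 < b) :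
    ∫ x in Ioo (0 : ℝ) 1, x ^ (a - 1) * (1 - x) ^ (b - 1) = ProbabilityTheory.beta a b := by
  have hcast : betaIntegral a b =
      ((∫ x in Ioo (0 : ℝ) 1, x ^ (a - 1) * (1 - x) ^ (b - 1) : ℝ) : ℂ) := by
    rw [betaIntegral, intervalIntegral.integral_of_le zero_le_one, integral_Ioc_eq_integral_Ioo,
      ← integral_complex_ofReal]
    refine setIntegral_congr_fun measurableSet_Ioo fun x hx => ?_
    push_cast [ofReal_cpow hx.1.le, ofReal_cpow (sub_nonneg.2 hx.2.le)]
    rfl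
  rw [ProbabilityTheory.beta_eq_betaIntegralReal a b ha hb, hcast, ofReal_re]

lemma integral_Ioi_rpow_sub_one_rpow {p b : ℝ} (hp : 0 < p) (hb : 0 < b) (hpb : p⁻¹ < 1 - b) :
    ∫ y in Ioi (1 : ℝ), (y ^ p - 1) ^ (b - 1) = ProbabilityTheory.beta (1 - b - p⁻¹) b / p := by
  have hneg : -p⁻¹ < 0 := neg_lt_zero.2 (inv_pos.2 hp)
  have hsubst := integral_Ioi_comp_of_tendsto_atTop (f := fun x : ℝ => x ^ (-p⁻¹))
    (f' := fun x : ℝ => -p⁻¹ * x ^ (-p⁻¹ - 1)) one_pos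
    (fun x hx => (Real.continuousAt_rpow_const x _ (.inl hx.1.ne')).continuousWithinAt)
    ((Real.strictAntiOn_rpow_Ioi_of_exponent_neg hneg).injOn.mono Ioc_subset_Ioi_self)
    (tendsto_rpow_neg_nhdsGT_zero hneg)
    (fun x hx => Real.hasDerivAt_rpow_const (.inl hx.1.ne')) (fun y => (y ^ p - 1) ^ (b - 1))
  rw [Real.one_rpow] at hsubst
  rw [hsubst, div_eq_inv_mul, ← integral_Ioo_rpow_mul_one_sub_rpow (by linarith) hb,
    ← integral_const_mul]
  refine setIntegral_congr_fun measurableSet_Ioo fun x hx => ?_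
  have hx0 : 0 < x := hx.1
  have hpow : (x ^ (-p⁻¹)) ^ p - 1 = (1 - x) * x⁻¹ := by
    rw [← Real.rpow_mul hx0.le, neg_mul, inv_mul_cancel₀ hp.ne', Real.rpow_neg_one]
    field_simp
  rw [hpow, Real.mul_rpow (by linarith [hx.2]) (by positivity), Real.inv_rpow hx0.le,
    ← Real.rpow_neg hx0.le, abs_mul, abs_neg, abs_of_pos (inv_pos.2 hp),
    abs_of_pos (Real.rpow_pos_of_pos hx0 _),
    show 1 - b - p⁻¹ - 1 = (-p⁻¹ - 1) + -(b - 1) by ring, Real.rpow_add hx0]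
  ring

end BetaIntegral

section GammaThird

lemma Gamma_two_thirds :
    Real.Gamma (2 / 3) = 2 * Real.pi / (√3 * Real.Gamma (1 / 3)) := by
  have hreflection := Real.Gamma_mul_Gamma_one_sub (1 / 3)
  rw [mul_one_div, Real.sin_pi_div_three, show (1 : ℝ) - 1 / 3 = 2 / 3 by norm_num] at hreflection
  field_simp at hreflection ⊢
  linarith

lemma Gamma_one_sixth :
    Real.Gamma (1 / 6) =
      2 ^ (2 / 3 : ℝ) * √Real.pi * Real.Gamma (1 / 3) / Real.Gamma (2 / 3) := by
  have hduplication := Real.Gamma_mul_Gamma_add_half (1 / 6)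
  norm_num only at hduplication
  rw [eq_div_iff (Real.Gamma_pos_of_pos (by norm_num)).ne', hduplication]
  ring

lemma ϖ₀_pos : 0 < ϖ₀ := by
  have hΓ : 0 < Real.Gamma (1 / 3) := Real.Gamma_pos_of_pos (by norm_num)
  exact div_pos (pow_pos hΓ 3) Real.two_pi_pos

lemma integral_one_div_sqrt_cube_sub_one :
    ∫ y in Ioi (1 : ℝ), 1 / √(y ^ 3 - 1) = ϖ₀ * 2 ^ (2 / 3 : ℝ) / 2 := by
  have hbeta := integral_Ioi_rpow_sub_one_rpow (p := 3) (b := 1 / 2) (by norm_num) (by norm_num)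
    (by norm_num)
  have hintegrand : EqOn (fun y : ℝ => 1 / √(y ^ 3 - 1))
      (fun y => (y ^ (3 : ℝ) - 1) ^ ((1 / 2 : ℝ) - 1)) (Ioi 1) := fun y hy => by
    have hy3 : 1 < y ^ 3 := one_lt_pow₀ hy (by norm_num)
    simp only
    rw [show (3 : ℝ) = (3 : ℕ) by norm_num, Real.rpow_natCast,
      show (1 / 2 : ℝ) - 1 = -(1 / 2) by norm_num, Real.rpow_neg (by linarith),
      Real.sqrt_eq_rpow, one_div]
  rw [setIntegral_congr_fun measurableSet_Ioi hintegrand, hbeta, ProbabilityTheory.beta]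
  norm_num only
  rw [Gamma_one_sixth, Gamma_two_thirds, Real.Gamma_one_half_eq, ϖ₀]
  field_simp
  rw [Real.sq_sqrt Real.pi_pos.le, Real.sq_sqrt (by norm_num)]
  ring

end GammaThird

section CubicIntegral

lemma integral_one_div_sqrt_four_cube_sub {e : ℝ} (he : 0 < e) :
    ∫ x in Ioi e, 1 / √(4 * x ^ 3 - 4 * e ^ 3) =
      (∫ y in Ioi (1 : ℝ), 1 / √(y ^ 3 - 1)) / (2 * √e) := by
  have hscale := integral_comp_mul_left_Ioi (fun x : ℝ => 1 / √(4 * x ^ 3 - 4 * e ^ 3)) 1 he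
  have hintegrand (y : ℝ) :
      1 / √(4 * (e * y) ^ 3 - 4 * e ^ 3) = 1 / (2 * e * √e) * (1 / √(y ^ 3 - 1)) := by
    rw [show 4 * (e * y) ^ 3 - 4 * e ^ 3 = (2 * e) ^ 2 * (e * (y ^ 3 - 1)) by ring,
      Real.sqrt_mul (by positivity), Real.sqrt_sq (by positivity), Real.sqrt_mul he.le,
      one_div_mul_one_div, mul_assoc (2 * e)]
  simp only [hintegrand, integral_const_mul, mul_one, smul_eq_mul] at hscale
  field_simp at hscale ⊢
  linarith

/-- The `x`-coordinate of the double of a point with `x`-coordinate `u` on the elliptic curve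
`y ^ 2 = 4 * x ^ 3 - 4 * e ^ 3`. -/
def xDouble (e u : ℝ) : ℝ := u * (u ^ 3 + 8 * e ^ 3) / (4 * (u ^ 3 - e ^ 3))

variable {e c u : ℝ}

lemma hasDerivAt_xDouble (hu : u ^ 3 ≠ e ^ 3) :
    HasDerivAt (xDouble e)
      (((u ^ 3) ^ 2 - 20 * e ^ 3 * u ^ 3 - 8 * (e ^ 3) ^ 2) / (4 * (u ^ 3 - e ^ 3) ^ 2)) u := by
  have hne : u ^ 3 - e ^ 3 ≠ 0 := sub_ne_zero.2 hu
  have hnum : HasDerivAt (fun u : ℝ => u * (u ^ 3 + 8 * e ^ 3)) (4 * u ^ 3 + 8 * e ^ 3) u :=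
    ((hasDerivAt_id u).mul ((hasDerivAt_pow 3 u).add_const _)).congr_deriv (by
      simp only [id]; ring)
  have hden : HasDerivAt (fun u : ℝ => 4 * (u ^ 3 - e ^ 3)) (12 * u ^ 2) u :=
    (((hasDerivAt_pow 3 u).sub_const _).const_mul 4).congr_deriv (by ring)
  refine (hnum.div hden (by simpa using hne)).congr_deriv ?_
  field_simp
  ring

lemma four_xDouble_cube_sub (hu : u ^ 3 ≠ e ^ 3) :
    4 * xDouble e u ^ 3 - 4 * e ^ 3 =
      ((u ^ 3) ^ 2 - 20 * e ^ 3 * u ^ 3 - 8 * (e ^ 3) ^ 2) ^ 2 / (16 * (u ^ 3 - e ^ 3) ^ 3) := by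
  have hne : u ^ 3 - e ^ 3 ≠ 0 := sub_ne_zero.2 hu
  rw [xDouble]
  field_simp
  ring

-- The points with `x`-coordinate `c` are `3`-torsion: their doubles are their opposites.
lemma xDouble_eq_self (he : 0 < e) (hc : c ^ 3 = 4 * e ^ 3) : xDouble e c = c := by
  rw [xDouble, hc]
  field_simp
  ring

lemma tendsto_xDouble_atTop (he : 0 < e) : Tendsto (xDouble e) (𝓝[>] e) atTop := by
  have hnum : Tendsto (fun u : ℝ => u * (u ^ 3 + 8 * e ^ 3)) (𝓝[>] e)
      (𝓝 (e * (e ^ 3 + 8 * e ^ 3))) :=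
    (by fun_prop : Continuous fun u : ℝ => u * (u ^ 3 + 8 * e ^ 3)).continuousWithinAt
  have hden : Tendsto (fun u : ℝ => 4 * (u ^ 3 - e ^ 3)) (𝓝[>] e) (𝓝[>] 0) := by
    refine tendsto_nhdsWithin_iff.2 ⟨?_, ?_⟩
    · have : Tendsto (fun u : ℝ => 4 * (u ^ 3 - e ^ 3)) (𝓝[>] e) (𝓝 (4 * (e ^ 3 - e ^ 3))) :=
        (by fun_prop : Continuous fun u : ℝ => 4 * (u ^ 3 - e ^ 3)).continuousWithinAt
      simpa using this
    · filter_upwards [self_mem_nhdsWithin] with u hu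
      have : e ^ 3 < u ^ 3 := pow_lt_pow_left₀ hu he.le (by norm_num)
      simpa using this
  exact hnum.pos_mul_atTop (by positivity) (tendsto_inv_nhdsGT_zero.comp hden)

lemma xDouble_deriv_num_neg (he : 0 < e) (hc : c ^ 3 = 4 * e ^ 3) (hu : u ∈ Ioo e c) :
    (u ^ 3) ^ 2 - 20 * e ^ 3 * u ^ 3 - 8 * (e ^ 3) ^ 2 < 0 := by
  have hu0 : 0 < u := he.trans hu.1
  have hu3 : u ^ 3 < 4 * e ^ 3 := hc ▸ pow_lt_pow_left₀ hu.2 hu0.le three_ne_zero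
  nlinarith [mul_pos (pow_pos hu0 3) (sub_pos.2 hu3), pow_pos he 3,
    mul_pos (pow_pos hu0 3) (pow_pos he 3)]

lemma strictAntiOn_xDouble (he : 0 < e) (hc : c ^ 3 = 4 * e ^ 3) :
    StrictAntiOn (xDouble e) (Ioc e c) := by
  have hne {u : ℝ} (hu : e < u) : u ^ 3 ≠ e ^ 3 := (pow_lt_pow_left₀ hu he.le (by norm_num)).ne'
  refine strictAntiOn_of_deriv_neg (convex_Ioc e c)
    (fun u hu => (hasDerivAt_xDouble (hne hu.1)).continuousAt.continuousWithinAt) fun u hu => ?_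
  rw [interior_Ioc] at hu
  have := sub_ne_zero.2 (hne hu.1)
  rw [(hasDerivAt_xDouble (hne hu.1)).deriv]
  exact div_neg_of_neg_of_pos (xDouble_deriv_num_neg he hc hu) (by positivity)

-- Duplication multiplies the invariant differential `dx / y` by `2`.
lemma integral_Ioi_eq_two_mul_integral_Ioo (he : 0 < e) (hec : e < c) (hc : c ^ 3 = 4 * e ^ 3) :
    ∫ x in Ioi c, 1 / √(4 * x ^ 3 - 4 * e ^ 3) =
      2 * ∫ x in Ioo e c, 1 / √(4 * x ^ 3 - 4 * e ^ 3) := by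
  have hlt {u : ℝ} (hu : e < u) : e ^ 3 < u ^ 3 := pow_lt_pow_left₀ hu he.le (by norm_num)
  have hanti := strictAntiOn_xDouble he hc
  have hsubst := integral_Ioi_comp_of_tendsto_atTop hec
    (fun u hu => (hasDerivAt_xDouble (hlt hu.1).ne').continuousAt.continuousWithinAt)
    hanti.injOn (tendsto_xDouble_atTop he) (fun u hu => hasDerivAt_xDouble (hlt hu.1).ne')
    (fun x => 1 / √(4 * x ^ 3 - 4 * e ^ 3))
  rw [xDouble_eq_self he hc] at hsubst
  rw [hsubst, ← integral_const_mul]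
  refine setIntegral_congr_fun measurableSet_Ioo fun u hu => ?_
  have hP := xDouble_deriv_num_neg he hc hu
  set P := (u ^ 3) ^ 2 - 20 * e ^ 3 * u ^ 3 - 8 * (e ^ 3) ^ 2
  have hs : 0 < u ^ 3 - e ^ 3 := sub_pos.2 (hlt hu.1)
  rw [four_xDouble_cube_sub (hlt hu.1).ne', ← mul_sub]
  set s := u ^ 3 - e ^ 3
  have hsqrt : √(P ^ 2 / (16 * s ^ 3)) = |P| / (4 * s * √s) := by
    rw [Real.sqrt_div (sq_nonneg P), Real.sqrt_sq_eq_abs,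
      show 16 * s ^ 3 = (4 * s) ^ 2 * s by ring, Real.sqrt_mul (sq_nonneg _),
      Real.sqrt_sq (by positivity)]
  have hsqrt_four : √(4 * s) = 2 * √s := by
    rw [show 4 * s = 2 ^ 2 * s by ring, Real.sqrt_mul (by norm_num), Real.sqrt_sq (by norm_num)]
  rw [hsqrt, hsqrt_four, abs_div, abs_of_pos (by positivity : 0 < 4 * s ^ 2)]
  have hPabs : 0 < |P| := abs_pos.2 hP.ne
  field_simp
  rw [Real.sq_sqrt hs.le]

lemma integral_Ioi_eq_two_thirds (he : 0 < e) (hc : c ^ 3 = 4 * e ^ 3) :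
    ∫ x in Ioi c, 1 / √(4 * x ^ 3 - 4 * e ^ 3) =
      2 / 3 * ∫ x in Ioi e, 1 / √(4 * x ^ 3 - 4 * e ^ 3) := by
  have hec : e < c := (Odd.pow_lt_pow (n := 3) (by decide)).1 (by linarith [pow_pos he 3])
  have hint : IntegrableOn (fun x : ℝ => 1 / √(4 * x ^ 3 - 4 * e ^ 3)) (Ioi e) := by
    refine Integrable.of_integral_ne_zero ?_
    have := ϖ₀_pos
    rw [integral_one_div_sqrt_four_cube_sub he, integral_one_div_sqrt_cube_sub_one]
    positivity
  have hsplit := setIntegral_union (Ioc_disjoint_Ioi le_rfl) measurableSet_Ioi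
    (hint.mono_set Ioc_subset_Ioi_self) (hint.mono_set (Ioi_subset_Ioi hec.le))
  rw [Ioc_union_Ioi_eq_Ioi hec.le, integral_Ioc_eq_integral_Ioo] at hsplit
  linarith [integral_Ioi_eq_two_mul_integral_Ioo he hec hc]

end CubicIntegral

lemma eventuallyEq_zero_of_deriv_deriv_eq_mul {𝕜 : Type*} [NontriviallyNormedField 𝕜]
    [CompleteSpace 𝕜] [CharZero 𝕜] {h q : 𝕜 → 𝕜} {z : 𝕜} (hh : AnalyticAt 𝕜 h z)
    (hq : AnalyticAt 𝕜 q z) (h_zero : h z = 0) (deriv_zero : deriv h z = 0)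
    (hode : deriv (deriv h) =ᶠ[𝓝 z] q * h) : h =ᶠ[𝓝 z] 0 := by
  have horder := hh.analyticOrderAt_deriv_add_one
  have horder' := hh.deriv.analyticOrderAt_deriv_add_one
  simp only [h_zero, deriv_zero, sub_zero] at horder horder'
  rw [analyticOrderAt_congr hode, analyticOrderAt_mul hq hh] at horder'
  rw [← horder'] at horder
  refine analyticOrderAt_eq_top.1 ?_
  by_contra hne
  generalize analyticOrderAt h z = n at *
  generalize analyticOrderAt q z = m at *
  lift n to ℕ using hne
  cases m with
  | top => simp at horder
  | coe m => norm_cast at horder; omega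

section Weierstrass

variable {L : PeriodPair} {z w : ℂ}

lemma eventually_notMem_lattice (hz : z ∉ L.lattice) : ∀ᶠ v in 𝓝 z, v ∉ L.lattice :=
  L.isClosed_lattice.isOpen_compl.mem_nhds hz

lemma hasDerivAt_weierstrassP (hz : z ∉ L.lattice) : HasDerivAt ℘[L] (℘'[L] z) z := by
  rw [← L.deriv_weierstrassP]
  exact (L.analyticOnNhd_weierstrassP z hz).differentiableAt.hasDerivAt

lemma eventually_derivWeierstrassP_ne_zero (L : PeriodPair) (z : ℂ) :
    ∀ᶠ v in 𝓝[≠] z, ℘'[L] v ≠ 0 := by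
  have horder : meromorphicOrderAt ℘'[L] 0 ≠ ⊤ := by
    rw [← L.deriv_weierstrassP,
      meromorphicOrderAt_deriv_eq_sub_one (n := -2) (by norm_num)
        (L.order_weierstrassP 0 (zero_mem _))]
    exact WithTop.coe_ne_top
  exact (meromorphicOrderAt_ne_top_iff_eventually_ne_zero (L.meromorphic_derivWeierstrassP z)).1
    (L.meromorphic_derivWeierstrassP.exists_meromorphicOrderAt_ne_top_iff_forall.1 ⟨0, horder⟩ z)

lemma derivWeierstrassP_mul_deriv (hz : z ∉ L.lattice) :
    ℘'[L] z * deriv ℘'[L] z = ℘'[L] z * (6 * ℘[L] z ^ 2 - L.g₂ / 2) := by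
  have hsq : (fun v => ℘'[L] v ^ 2) =ᶠ[𝓝 z] fun v => 4 * ℘[L] v ^ 3 - L.g₂ * ℘[L] v - L.g₃ :=
    (eventually_notMem_lattice hz).mono L.derivWeierstrassP_sq
  have hP := hasDerivAt_weierstrassP hz
  have hP' := (L.analyticOnNhd_derivWeierstrassP z hz).differentiableAt.hasDerivAt
  have := (hP'.pow 2).unique
    (((((hP.pow 3).const_mul 4).sub (hP.const_mul L.g₂)).sub_const L.g₃).congr_of_eventuallyEq hsq)
  push_cast at this
  linear_combination this / 2

lemma hasDerivAt_derivWeierstrassP (hz : z ∉ L.lattice) :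
    HasDerivAt ℘'[L] (6 * ℘[L] z ^ 2 - L.g₂ / 2) z := by
  have hP' := L.analyticOnNhd_derivWeierstrassP z hz
  have heq : deriv ℘'[L] =ᶠ[𝓝[≠] z] fun v => 6 * ℘[L] v ^ 2 - L.g₂ / 2 := by
    filter_upwards [eventually_derivWeierstrassP_ne_zero L z,
      nhdsWithin_le_nhds (eventually_notMem_lattice hz)] with v hv hvL
    exact mul_left_cancel₀ hv (derivWeierstrassP_mul_deriv hvL)
  have hcont : ContinuousAt (fun v => 6 * ℘[L] v ^ 2 - L.g₂ / 2) z := by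
    have := (hasDerivAt_weierstrassP hz).continuousAt
    fun_prop
  rw [← ((hP'.deriv.continuousAt.eventuallyEq_nhds_iff_eventuallyEq_nhdsNE hcont).1
    heq).eq_of_nhds]
  exact hP'.differentiableAt.hasDerivAt

-- Both functions solve `P'' = 6 P ^ 2 - g₂ / 2` with the same initial values at `z`.
lemma eventuallyEq_weierstrassP_add {d : ℂ} (hz : z ∉ L.lattice) (hzd : z + d ∉ L.lattice)
    (hP : ℘[L] (z + d) = ℘[L] z) (hP' : ℘'[L] (z + d) = ℘'[L] z) :
    (fun v => ℘[L] (v + d)) =ᶠ[𝓝 z] ℘[L] := by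
  have hnear : ∀ᶠ v in 𝓝 z, v ∉ L.lattice ∧ v + d ∉ L.lattice :=
    (eventually_notMem_lattice hz).and
      ((continuous_add_const d).tendsto z |>.eventually (eventually_notMem_lattice hzd))
  have hderiv : deriv (fun v => ℘[L] (v + d) - ℘[L] v) =ᶠ[𝓝 z]
      fun v => ℘'[L] (v + d) - ℘'[L] v := hnear.mono fun v hv =>
    (((hasDerivAt_weierstrassP hv.2).comp_add_const v d).sub (hasDerivAt_weierstrassP hv.1)).deriv
  have hderiv₂ : deriv (fun v => ℘'[L] (v + d) - ℘'[L] v) =ᶠ[𝓝 z]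
      (fun v => 6 * (℘[L] (v + d) + ℘[L] v)) * fun v => ℘[L] (v + d) - ℘[L] v :=
    hnear.mono fun v hv => by
      rw [(((hasDerivAt_derivWeierstrassP hv.2).comp_add_const v d).fun_sub
        (hasDerivAt_derivWeierstrassP hv.1)).deriv]
      simp only [Pi.mul_apply]
      ring
  have hP_an := L.analyticOnNhd_weierstrassP z hz
  have hPd_an : AnalyticAt ℂ (fun v => ℘[L] (v + d)) z :=
    (L.analyticOnNhd_weierstrassP (z + d) hzd).fun_comp (f := fun v => v + d) (by fun_prop)
  have := eventuallyEq_zero_of_deriv_deriv_eq_mul (hPd_an.fun_sub hP_an)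
    (analyticAt_const.mul (hPd_an.fun_add hP_an)) (by simp [hP])
    (by rw [hderiv.eq_of_nhds, hP', sub_self]) (hderiv.deriv.trans hderiv₂)
  exact this.mono fun v hv => sub_eq_zero.1 hv

lemma sub_mem_lattice_of_weierstrassP_eq_of_derivWeierstrassP_eq (hz : z ∉ L.lattice)
    (hw : w ∉ L.lattice) (hP : ℘[L] z = ℘[L] w) (hP' : ℘'[L] z = ℘'[L] w) :
    w - z ∈ L.lattice := by
  by_contra hd
  have heq := eventuallyEq_weierstrassP_add (d := w - z) hz (by simpa using hw)
    (by simpa using hP.symm) (by simpa using hP'.symm)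
  set Q : ℂ → ℂ := fun v => ℘[L] (v + (w - z))
  have hQ_an : AnalyticAt ℂ Q 0 :=
    (L.analyticOnNhd_weierstrassP (w - z) hd).fun_comp_of_eq (by fun_prop) (zero_add _)
  have hQ_mero : Meromorphic Q := fun v =>
    meromorphicAt_comp_add_const_iff_meromorphicAt.2 (L.meromorphic_weierstrassP (v + (w - z)))
  have hpole := L.order_weierstrassP 0 (zero_mem _)
  have horder : meromorphicOrderAt (℘[L] + -Q) 0 = -2 := by
    rw [meromorphicOrderAt_add_eq_left_of_lt hQ_an.neg.meromorphicAt, hpole]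
    exact hpole ▸ lt_of_lt_of_le (by decide) hQ_an.neg.meromorphicOrderAt_nonneg
  have hmero : Meromorphic (℘[L] + -Q) := L.meromorphic_weierstrassP.add hQ_mero.neg
  refine hmero.exists_meromorphicOrderAt_ne_top_iff_forall.1 ⟨0, ?_⟩ z
    (meromorphicOrderAt_eq_top_iff.2 ?_)
  · rw [horder]; decide
  · filter_upwards [nhdsWithin_le_nhds heq] with v hv
    simp [hv]

lemma sub_mem_or_add_mem_lattice_of_weierstrassP_eq (hz : z ∉ L.lattice) (hw : w ∉ L.lattice)
    (hP : ℘[L] z = ℘[L] w) : w - z ∈ L.lattice ∨ w + z ∈ L.lattice := by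
  have hsq : ℘'[L] z ^ 2 = ℘'[L] w ^ 2 := by
    rw [L.derivWeierstrassP_sq z hz, L.derivWeierstrassP_sq w hw, hP]
  rcases sq_eq_sq_iff_eq_or_eq_neg.1 hsq with hP' | hP'
  · exact .inl (sub_mem_lattice_of_weierstrassP_eq_of_derivWeierstrassP_eq hz hw hP hP')
  · right
    have := sub_mem_lattice_of_weierstrassP_eq_of_derivWeierstrassP_eq (z := -z)
      (by rwa [neg_mem_iff]) hw (by rwa [L.weierstrassP_neg])
      (by rw [L.derivWeierstrassP_neg, hP', neg_neg])
    rwa [sub_neg_eq_add] at this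

lemma two_mul_mem_lattice_of_derivWeierstrassP_eq_zero (hz : z ∉ L.lattice)
    (hP' : ℘'[L] z = 0) : 2 * z ∈ L.lattice := by
  have := sub_mem_lattice_of_weierstrassP_eq_of_derivWeierstrassP_eq (z := -z)
    (by rwa [neg_mem_iff]) hz (L.weierstrassP_neg z)
    (by rw [L.derivWeierstrassP_neg, hP', neg_zero])
  rwa [sub_neg_eq_add, ← two_mul] at this

lemma derivWeierstrassP_half_eq_zero (l : L.lattice) : ℘'[L] (l / 2) = 0 := by
  have h := L.derivWeierstrassP_add_coe (-(l / 2)) l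
  rw [L.derivWeierstrassP_neg, show -((l : ℂ) / 2) + l = l / 2 by ring] at h
  linear_combination h / 2

end Weierstrass

section LatticeSymmetry

variable {L : PeriodPair} {u : ℂ}

lemma tsum_lattice_comp (σ : ℂ ≃ ℂ) (hσ : ∀ z, z ∈ L.lattice ↔ σ z ∈ L.lattice) (f : ℂ → ℂ) :
    ∑' l : L.lattice, f (σ l) = ∑' l : L.lattice, f l :=
  (σ.subtypeEquiv hσ).tsum_eq fun l : L.lattice => f l

lemma tsum_lattice_mul (hu : u ≠ 0) (hL : ∀ z, z ∈ L.lattice ↔ u * z ∈ L.lattice) (f : ℂ → ℂ) :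
    ∑' l : L.lattice, f (u * l) = ∑' l : L.lattice, f l :=
  tsum_lattice_comp (Equiv.mulLeft₀ u hu) hL f

lemma weierstrassP_mul (hu : u ≠ 0) (hL : ∀ z, z ∈ L.lattice ↔ u * z ∈ L.lattice) (z : ℂ) :
    ℘[L] (u * z) = (u ^ 2)⁻¹ * ℘[L] z := by
  rw [PeriodPair.weierstrassP, PeriodPair.weierstrassP,
    ← tsum_lattice_mul hu hL fun l => 1 / (u * z - l) ^ 2 - 1 / l ^ 2, ← tsum_mul_left]
  refine tsum_congr fun l => ?_
  simp only [← mul_sub, mul_pow, one_div, mul_inv]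

lemma derivWeierstrassP_mul (hu : u ≠ 0) (hL : ∀ z, z ∈ L.lattice ↔ u * z ∈ L.lattice) (z : ℂ) :
    ℘'[L] (u * z) = (u ^ 3)⁻¹ * ℘'[L] z := by
  rw [PeriodPair.derivWeierstrassP, PeriodPair.derivWeierstrassP,
    ← tsum_lattice_mul hu hL fun l => 2 / (u * z - l) ^ 3, mul_neg, ← tsum_mul_left]
  refine congrArg _ (tsum_congr fun l => ?_)
  rw [← mul_sub, mul_pow, div_eq_mul_inv, mul_inv, mul_left_comm, div_eq_mul_inv]

lemma G_eq_zero_of_mul (hu : u ≠ 0) (hL : ∀ z, z ∈ L.lattice ↔ u * z ∈ L.lattice) {n : ℕ}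
    (hun : u ^ n ≠ 1) : L.G n = 0 := by
  have h : L.G n = (u ^ n)⁻¹ * L.G n := by
    conv_lhs => rw [PeriodPair.G, ← tsum_lattice_mul hu hL fun l => (l ^ n)⁻¹]
    rw [PeriodPair.G, ← tsum_mul_left]
    exact tsum_congr fun l => by rw [mul_pow, mul_inv]
  by_contra hG
  exact hun (inv_eq_one.1 (mul_right_cancel₀ hG (h.symm.trans (one_mul _).symm)))

end LatticeSymmetry

section RealLattice

variable {L : PeriodPair}

lemma tsum_lattice_conj (hL : ∀ z ∈ L.lattice, conj z ∈ L.lattice) (f : ℂ → ℂ) :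
    ∑' l : L.lattice, f (conj (l : ℂ)) = ∑' l : L.lattice, f l :=
  tsum_lattice_comp Complex.conjAe.toEquiv
    (fun z => ⟨hL z, fun h => by simpa using hL _ h⟩) f

lemma weierstrassP_conj (hL : ∀ z ∈ L.lattice, conj z ∈ L.lattice) (z : ℂ) :
    ℘[L] (conj z) = conj (℘[L] z) := by
  rw [PeriodPair.weierstrassP, PeriodPair.weierstrassP,
    ← tsum_lattice_conj hL fun l => 1 / (conj z - l) ^ 2 - 1 / l ^ 2, conj_tsum]
  simp only [map_sub, map_div₀, map_pow, map_one]

lemma derivWeierstrassP_conj (hL : ∀ z ∈ L.lattice, conj z ∈ L.lattice) (z : ℂ) :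
    ℘'[L] (conj z) = conj (℘'[L] z) := by
  rw [PeriodPair.derivWeierstrassP, PeriodPair.derivWeierstrassP,
    ← tsum_lattice_conj hL fun l => 2 / (conj z - l) ^ 3, map_neg, conj_tsum]
  simp only [map_sub, map_div₀, map_pow, map_ofNat]

lemma conj_G (hL : ∀ z ∈ L.lattice, conj z ∈ L.lattice) (n : ℕ) : conj (L.G n) = L.G n := by
  conv_rhs => rw [PeriodPair.G, ← tsum_lattice_conj hL fun l => (l ^ n)⁻¹]
  rw [PeriodPair.G, conj_tsum]
  simp only [map_inv₀, map_pow]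

lemma ofReal_re_weierstrassP (hL : ∀ z ∈ L.lattice, conj z ∈ L.lattice) (t : ℝ) :
    ((℘[L] t).re : ℂ) = ℘[L] t :=
  conj_eq_iff_re.1 (by rw [← weierstrassP_conj hL, conj_ofReal])

lemma ofReal_re_derivWeierstrassP (hL : ∀ z ∈ L.lattice, conj z ∈ L.lattice) (t : ℝ) :
    ((℘'[L] t).re : ℂ) = ℘'[L] t :=
  conj_eq_iff_re.1 (by rw [← derivWeierstrassP_conj hL, conj_ofReal])

lemma re_derivWeierstrassP_sq (hL : ∀ z ∈ L.lattice, conj z ∈ L.lattice) {t : ℝ}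
    (ht : (t : ℂ) ∉ L.lattice) :
    (℘'[L] t).re ^ 2 = 4 * (℘[L] t).re ^ 3 - L.g₂.re * (℘[L] t).re - L.g₃.re := by
  have hg₂ : ((L.g₂.re : ℝ) : ℂ) = L.g₂ :=
    conj_eq_iff_re.1 (by rw [PeriodPair.g₂, map_mul, map_ofNat, conj_G hL])
  have hg₃ : ((L.g₃.re : ℝ) : ℂ) = L.g₃ :=
    conj_eq_iff_re.1 (by rw [PeriodPair.g₃, map_mul, map_ofNat, conj_G hL])
  have h := L.derivWeierstrassP_sq t ht
  rw [← ofReal_re_weierstrassP hL, ← ofReal_re_derivWeierstrassP hL, ← hg₂, ← hg₃] at h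
  exact_mod_cast h

lemma tendsto_sq_mul_weierstrassP (L : PeriodPair) :
    Tendsto (fun z => z ^ 2 * ℘[L] z) (𝓝[≠] 0) (𝓝 1) := by
  have hcont : ContinuousAt (fun z : ℂ => z ^ 2 * L.weierstrassPExcept 0 z + 1) 0 := by
    have := (L.analyticAt_weierstrassPExcept 0).continuousAt
    fun_prop
  have hlim := hcont.tendsto.mono_left (nhdsWithin_le_nhds (s := {0}ᶜ))
  rw [zero_pow two_ne_zero, zero_mul, zero_add] at hlim
  refine hlim.congr' ?_
  filter_upwards [self_mem_nhdsWithin] with z hz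
  simpa [if_neg (show z ≠ 0 from hz)] using
    (L.ite_eq_one_sub_sq_mul_weierstrassP 0 (zero_mem _) z).symm

lemma tendsto_re_weierstrassP_atTop (L : PeriodPair) :
    Tendsto (fun t : ℝ => (℘[L] t).re) (𝓝[>] 0) atTop := by
  have hofReal : Tendsto ((↑) : ℝ → ℂ) (𝓝[>] 0) (𝓝[≠] 0) :=
    continuous_ofReal.continuousWithinAt.tendsto_nhdsWithin fun t (ht : 0 < t) =>
      ofReal_ne_zero.2 ht.ne'
  have hre := (continuous_re.tendsto 1).comp ((tendsto_sq_mul_weierstrassP L).comp hofReal)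
  have hsq : Tendsto (fun t : ℝ => (t ^ 2)⁻¹) (𝓝[>] 0) atTop := by
    simpa only [Function.comp_def, inv_pow] using
      (tendsto_pow_atTop two_ne_zero).comp (tendsto_inv_nhdsGT_zero (𝕜 := ℝ))
  refine (hsq.atTop_mul_pos (by simp) hre).congr' ?_
  filter_upwards [self_mem_nhdsWithin] with t ht
  have ht : t ≠ 0 := (mem_Ioi.1 ht).ne'
  simp only [Function.comp, ← ofReal_pow, re_ofReal_mul]
  field_simp

variable {ω z : ℝ}

lemma injOn_re_weierstrassP (hL : ∀ z ∈ L.lattice, conj z ∈ L.lattice)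
    (hω : ∀ t ∈ Ioo 0 ω, (t : ℂ) ∉ L.lattice) :
    InjOn (fun t : ℝ => (℘[L] t).re) (Ioc 0 (ω / 2)) := by
  intro s hs t ht hst
  wlog hlt : s ≤ t generalizing s t
  · exact (this ht hs hst.symm (le_of_not_ge hlt)).symm
  refine hlt.eq_of_not_lt fun hlt => ?_
  have hP : ℘[L] s = ℘[L] t := by
    rw [← ofReal_re_weierstrassP hL, ← ofReal_re_weierstrassP hL t]
    exact congrArg _ hst
  have hs0 := hs.1
  have htω := ht.2
  rcases sub_mem_or_add_mem_lattice_of_weierstrassP_eq (hω s ⟨hs0, by linarith⟩)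
    (hω t ⟨by linarith, by linarith⟩) hP with h | h
  · exact hω (t - s) ⟨by linarith, by linarith⟩ (by exact_mod_cast h)
  · exact hω (t + s) ⟨by linarith, by linarith⟩ (by exact_mod_cast h)

lemma continuousOn_re_weierstrassP (hω : ∀ t ∈ Ioo 0 ω, (t : ℂ) ∉ L.lattice) :
    ContinuousOn (fun t : ℝ => (℘[L] t).re) (Ioo 0 ω) := fun t ht =>
  (hasDerivAt_weierstrassP (hω t ht)).real_of_complex.continuousAt.continuousWithinAt

lemma image_re_weierstrassP_Ioo (hL : ∀ z ∈ L.lattice, conj z ∈ L.lattice)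
    (hω : ∀ t ∈ Ioo 0 ω, (t : ℂ) ∉ L.lattice) (hz : z ∈ Ioc 0 (ω / 2)) :
    (fun t : ℝ => (℘[L] t).re) '' Ioo 0 z = Ioi (℘[L] z).re :=
  image_Ioo_eq_Ioi_of_tendsto_atTop hz.1
    ((continuousOn_re_weierstrassP hω).mono fun t ht => ⟨ht.1, by linarith [hz.1, hz.2, ht.2]⟩)
    ((injOn_re_weierstrassP hL hω).mono (Ioc_subset_Ioc_right hz.2))
    (tendsto_re_weierstrassP_atTop L)

lemma integral_Ioi_weierstrassP (hL : ∀ z ∈ L.lattice, conj z ∈ L.lattice)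
    (hω : ∀ t ∈ Ioo 0 ω, (t : ℂ) ∉ L.lattice) (hz : z ∈ Ioc 0 (ω / 2)) :
    ∫ x in Ioi (℘[L] z).re, 1 / √(4 * x ^ 3 - L.g₂.re * x - L.g₃.re) = z := by
  have hmem {t : ℝ} (ht : t ∈ Ioc 0 z) : t ∈ Ioo 0 ω := ⟨ht.1, by linarith [hz.1, hz.2, ht.2]⟩
  rw [integral_Ioi_comp_of_tendsto_atTop hz.1
    ((continuousOn_re_weierstrassP hω).mono fun t => hmem)
    ((injOn_re_weierstrassP hL hω).mono (Ioc_subset_Ioc_right hz.2))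
    (tendsto_re_weierstrassP_atTop L)
    fun t ht => (hasDerivAt_weierstrassP (hω t (hmem (Ioo_subset_Ioc_self ht)))).real_of_complex]
  have hone : EqOn (fun t : ℝ => |(℘'[L] t).re| *
      (1 / √(4 * (℘[L] t).re ^ 3 - L.g₂.re * (℘[L] t).re - L.g₃.re))) (fun _ => 1) (Ioo 0 z) := by
    intro t ht
    have htL := hω t (hmem (Ioo_subset_Ioc_self ht))
    have hne : (℘'[L] t).re ≠ 0 := fun h0 =>
      hω (2 * t) ⟨by linarith [ht.1], by linarith [ht.2, hz.2]⟩ <| by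
        push_cast
        refine two_mul_mem_lattice_of_derivWeierstrassP_eq_zero htL ?_
        rw [← ofReal_re_derivWeierstrassP hL, h0, ofReal_zero]
    simp only
    rw [← re_derivWeierstrassP_sq hL htL, Real.sqrt_sq_eq_abs,
      mul_one_div_cancel (abs_ne_zero.2 hne)]
  rw [setIntegral_congr_fun measurableSet_Ioo hone, setIntegral_const]
  simp [hz.1.le]

end RealLattice

section HexagonalLattice

lemma τ_eq : τ = (1 / 2 : ℝ) + (√3 / 2 : ℝ) * I := by
  rw [τ, show (Real.pi : ℂ) * I / 3 = ((Real.pi / 3 : ℝ) : ℂ) * I by push_cast; ring, exp_mul_I,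
    ← ofReal_cos, ← ofReal_sin, Real.cos_pi_div_three, Real.sin_pi_div_three]

lemma τ_re : τ.re = 1 / 2 := by simp [τ_eq]

lemma τ_im : τ.im = √3 / 2 := by simp [τ_eq]

lemma τ_cube : τ ^ 3 = -1 := by
  rw [τ, ← exp_nat_mul, ← exp_pi_mul_I]
  congr 1
  push_cast
  ring

lemma τ_sq : τ ^ 2 = τ - 1 := by
  have hne : τ + 1 ≠ 0 := fun h => by
    have := congrArg re h
    norm_num [τ_re] at this
  exact mul_left_cancel₀ hne (by linear_combination τ_cube)

lemma τ_ne_zero : τ ≠ 0 := exp_ne_zero _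

lemma conj_τ : conj τ = 1 - τ := by
  apply Complex.ext
  · norm_num [τ_re]
  · simp [τ_im]

variable {ω : ℝ}

lemma hexPt_re (p : ℤ × ℤ) : (hexPt ω p).re = (p.1 + p.2 / 2) * ω := by
  simp only [hexPt, add_re, mul_re, intCast_re, ofReal_re, intCast_im, ofReal_im, τ_re, mul_im]
  ring

lemma hexPt_im (p : ℤ × ℤ) : (hexPt ω p).im = √3 / 2 * (p.2 * ω) := by
  simp only [hexPt, add_im, mul_im, intCast_re, ofReal_re, intCast_im, ofReal_im, τ_im, mul_re]
  ring

lemma τ_mul_mem_hexLattice {z : ℂ} (hz : z ∈ hexLattice ω) : τ * z ∈ hexLattice ω := by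
  obtain ⟨⟨m, n⟩, rfl⟩ := hz
  refine ⟨(-n, m + n), ?_⟩
  simp only [hexPt]
  push_cast
  linear_combination -(n : ℂ) * ω * τ_sq

lemma conj_mem_hexLattice {z : ℂ} (hz : z ∈ hexLattice ω) : conj z ∈ hexLattice ω := by
  obtain ⟨⟨m, n⟩, rfl⟩ := hz
  refine ⟨(m + n, -n), ?_⟩
  simp only [hexPt, map_add, map_mul, conj_τ, map_intCast, conj_ofReal]
  push_cast
  ring

lemma intCast_mul_notMem_Ioo (n : ℤ) (ω : ℝ) : n * ω ∉ Ioo 0 ω := by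
  rintro ⟨h0, h1⟩
  have hω : 0 < ω := h0.trans h1
  have hn0 : (0 : ℝ) < n := pos_of_mul_pos_left h0 hω.le
  have hn1 : (n : ℝ) < 1 := by nlinarith
  norm_cast at hn0 hn1
  omega

lemma im_ne_of_mem_hexLattice {z : ℂ} (hz : z ∈ hexLattice ω) {t : ℝ} (ht : t ∈ Ioo 0 ω) :
    z.im ≠ √3 / 2 * t := by
  obtain ⟨p, rfl⟩ := hz
  rw [hexPt_im]
  intro h
  exact intCast_mul_notMem_Ioo p.2 ω (mul_left_cancel₀ (by positivity) h ▸ ht)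

lemma ofReal_notMem_hexLattice {t : ℝ} (ht : t ∈ Ioo 0 ω) : (t : ℂ) ∉ hexLattice ω := by
  rintro ⟨p, hp⟩
  have hω : ω ≠ 0 := (ht.1.trans ht.2).ne'
  have hp2 : (p.2 : ℝ) = 0 := by simpa [hexPt_im, hω] using congrArg im hp
  have hp1 : p.1 * ω = t := by simpa [hexPt_re, hp2] using congrArg re hp
  exact intCast_mul_notMem_Ioo p.1 ω (hp1 ▸ ht)

/-- The periods `ω` and `e^{πi/3} ω`, generating the hexagonal lattice `hexLattice ω`. -/
def hexPeriodPair (ω : ℝ) (hω : ω ≠ 0) : PeriodPair where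
  ω₁ := ω
  ω₂ := τ * ω
  indep := by
    rw [LinearIndependent.pair_iff]
    intro s t h
    have ht : t = 0 := by simpa [τ_im, hω] using congrArg im h
    have hs : s = 0 := by simpa [ht, hω] using congrArg re h
    exact ⟨hs, ht⟩

lemma mem_lattice_hexPeriodPair {hω : ω ≠ 0} {z : ℂ} :
    z ∈ (hexPeriodPair ω hω).lattice ↔ z ∈ hexLattice ω := by
  simp only [PeriodPair.mem_lattice, hexPeriodPair, hexLattice, Set.mem_range, Prod.exists, hexPt,
    mul_assoc]

lemma wp_eq_weierstrassP (z : ℂ) : wp z = ℘[hexPeriodPair ϖ₀ ϖ₀_pos.ne'] z := by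
  set L := hexPeriodPair ϖ₀ ϖ₀_pos.ne'
  have hpt (p : ℤ × ℤ) : ((L.latticeEquivProd.symm p : L.lattice) : ℂ) = hexPt ϖ₀ p := by
    rw [L.latticeEquiv_symm_apply, hexPt, mul_assoc]
    rfl
  have hsum : HasSum (fun p => 1 / (z - hexPt ϖ₀ p) ^ 2 - 1 / hexPt ϖ₀ p ^ 2) (℘[L] z) := by
    have := L.latticeEquivProd.symm.toEquiv.hasSum_iff.2 (L.hasSum_weierstrassP z)
    simpa only [Function.comp_def, LinearEquiv.coe_toEquiv, hpt] using this
  rw [wp, ← hsum.tsum_eq, ← hsum.summable.tsum_subtype_add_tsum_subtype_compl {0},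
    tsum_singleton (f := fun p => 1 / (z - hexPt ϖ₀ p) ^ 2 - 1 / hexPt ϖ₀ p ^ 2)]
  rw [show hexPt ϖ₀ 0 = 0 by simp [hexPt], sub_zero, zero_pow two_ne_zero, div_zero, sub_zero]
  rfl

lemma τ_mul_mem_lattice_iff {hω : ω ≠ 0} (z : ℂ) :
    z ∈ (hexPeriodPair ω hω).lattice ↔ τ * z ∈ (hexPeriodPair ω hω).lattice := by
  simp only [mem_lattice_hexPeriodPair]
  refine ⟨τ_mul_mem_hexLattice, fun h => ?_⟩
  have := τ_mul_mem_hexLattice <| τ_mul_mem_hexLattice <| τ_mul_mem_hexLattice <|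
    τ_mul_mem_hexLattice <| τ_mul_mem_hexLattice h
  rwa [show τ * (τ * (τ * (τ * (τ * (τ * z))))) = z by
    linear_combination z * (τ ^ 3 - 1) * τ_cube] at this

lemma conj_mem_lattice_hexPeriodPair {hω : ω ≠ 0} :
    ∀ z ∈ (hexPeriodPair ω hω).lattice, conj z ∈ (hexPeriodPair ω hω).lattice := by
  simp only [mem_lattice_hexPeriodPair]
  exact fun z => conj_mem_hexLattice

lemma ofReal_notMem_lattice_hexPeriodPair {hω : ω ≠ 0} :
    ∀ t ∈ Ioo 0 ω, (t : ℂ) ∉ (hexPeriodPair ω hω).lattice := by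
  simp only [mem_lattice_hexPeriodPair]
  exact fun t => ofReal_notMem_hexLattice

lemma g₂_hexPeriodPair (hω : ω ≠ 0) : (hexPeriodPair ω hω).g₂ = 0 := by
  have hτ : τ ^ 4 ≠ 1 := fun h => by
    have := congrArg im (show τ = -1 by linear_combination τ * τ_cube - h)
    norm_num [τ_im] at this
  rw [PeriodPair.g₂, G_eq_zero_of_mul τ_ne_zero τ_mul_mem_lattice_iff hτ, mul_zero]

lemma weierstrassP_hexPeriodPair_ne_zero {hω : ω ≠ 0} {t : ℝ} (ht : t ∈ Ioo 0 ω) :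
    ℘[hexPeriodPair ω hω] t ≠ 0 := by
  intro h0
  have htL := ofReal_notMem_lattice_hexPeriodPair (hω := hω) t ht
  have hτt : τ * (τ * t) ∉ (hexPeriodPair ω hω).lattice := by
    rwa [← τ_mul_mem_lattice_iff, ← τ_mul_mem_lattice_iff]
  -- As `τ ^ 6 = 1`, multiplication by `τ ^ 2` preserves `℘'`; it preserves `℘` where `℘` vanishes.
  have hP : ℘[hexPeriodPair ω hω] t = ℘[hexPeriodPair ω hω] (τ * (τ * t)) := by
    simp only [weierstrassP_mul τ_ne_zero τ_mul_mem_lattice_iff, h0, mul_zero]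
  have hP' : ℘'[hexPeriodPair ω hω] t = ℘'[hexPeriodPair ω hω] (τ * (τ * t)) := by
    simp only [derivWeierstrassP_mul τ_ne_zero τ_mul_mem_lattice_iff, τ_cube]
    norm_num
  refine im_ne_of_mem_hexLattice (mem_lattice_hexPeriodPair.1
    (sub_mem_lattice_of_weierstrassP_eq_of_derivWeierstrassP_eq htL hτt hP hP')) ht ?_
  rw [← mul_assoc, ← sq, τ_sq, sub_mul, one_mul]
  simp [τ_im]

lemma re_weierstrassP_hexPeriodPair_half_pos (hω : 0 < ω) :
    0 < (℘[hexPeriodPair ω hω.ne'] (ω / 2 : ℝ)).re := by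
  have hne {t : ℝ} (ht : t ∈ Ioo 0 ω) : (℘[hexPeriodPair ω hω.ne'] t).re ≠ 0 := fun h =>
    weierstrassP_hexPeriodPair_ne_zero ht <| by
      rw [← ofReal_re_weierstrassP conj_mem_lattice_hexPeriodPair, h, ofReal_zero]
  by_contra hle
  have hlt := (not_lt.1 hle).lt_of_ne (hne ⟨by linarith, by linarith⟩)
  rw [← mem_Ioi, ← image_re_weierstrassP_Ioo conj_mem_lattice_hexPeriodPair
    ofReal_notMem_lattice_hexPeriodPair ⟨by linarith, le_rfl⟩] at hlt
  obtain ⟨t, ht, h0⟩ := hlt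
  exact hne ⟨ht.1, by linarith [ht.2]⟩ h0

lemma g₃_re_eq_four_mul_re_weierstrassP_half_cube (hω : 0 < ω) :
    (hexPeriodPair ω hω.ne').g₃.re = 4 * (℘[hexPeriodPair ω hω.ne'] (ω / 2 : ℝ)).re ^ 3 := by
  have hP' : ℘'[hexPeriodPair ω hω.ne'] (ω / 2 : ℝ) = 0 := by
    push_cast
    exact derivWeierstrassP_half_eq_zero ⟨ω, (hexPeriodPair ω hω.ne').ω₁_mem_lattice⟩
  have hsq := re_derivWeierstrassP_sq (L := hexPeriodPair ω hω.ne') conj_mem_lattice_hexPeriodPair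
    (ofReal_notMem_lattice_hexPeriodPair (ω / 2) ⟨by linarith, by linarith⟩)
  rw [hP', g₂_hexPeriodPair, zero_re] at hsq
  linarith

lemma integral_Ioi_weierstrassP_hexPeriodPair (hω : 0 < ω) {z : ℝ} (hz : z ∈ Ioc 0 (ω / 2)) :
    ∫ x in Ioi (℘[hexPeriodPair ω hω.ne'] z).re,
      1 / √(4 * x ^ 3 - (hexPeriodPair ω hω.ne').g₃.re) = z := by
  simpa only [g₂_hexPeriodPair, zero_re, zero_mul, sub_zero] using
    integral_Ioi_weierstrassP (L := hexPeriodPair ω hω.ne') conj_mem_lattice_hexPeriodPair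
      ofReal_notMem_lattice_hexPeriodPair hz

lemma g₃_hexPeriodPair_re (hω : 0 < ω) : (hexPeriodPair ω hω.ne').g₃.re = (ϖ₀ / ω) ^ 6 := by
  have he := re_weierstrassP_hexPeriodPair_half_pos hω
  have hint := integral_Ioi_weierstrassP_hexPeriodPair hω ⟨by linarith, le_rfl⟩
  rw [g₃_re_eq_four_mul_re_weierstrassP_half_cube hω] at hint ⊢
  set e := (℘[hexPeriodPair ω hω.ne'] (ω / 2 : ℝ)).re
  rw [integral_one_div_sqrt_four_cube_sub he, integral_one_div_sqrt_cube_sub_one] at hint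
  have hsqrt : √e = ϖ₀ / ω * 2 ^ (2 / 3 : ℝ) / 2 := by
    have := Real.sqrt_pos.2 he
    field_simp at hint ⊢
    linarith
  have htwo : ((2 : ℝ) ^ (2 / 3 : ℝ)) ^ 6 = 2 ^ 4 := by
    rw [← Real.rpow_mul_natCast (by norm_num)]
    norm_num
  calc 4 * e ^ 3 = 4 * (√e) ^ 6 := by
        rw [show (√e) ^ 6 = (√e ^ 2) ^ 3 by ring, Real.sq_sqrt he.le]
    _ = (ϖ₀ / ω) ^ 6 * (4 * ((2 : ℝ) ^ (2 / 3 : ℝ)) ^ 6 / 2 ^ 6) := by rw [hsqrt]; ring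
    _ = (ϖ₀ / ω) ^ 6 := by rw [htwo]; norm_num

lemma weierstrassP_hexPeriodPair_third (hω : 0 < ω) :
    ℘[hexPeriodPair ω hω.ne'] (ω / 3 : ℝ) = ((ϖ₀ / ω) ^ 2 : ℝ) := by
  have he := re_weierstrassP_hexPeriodPair_half_pos hω
  have hg₃ := g₃_re_eq_four_mul_re_weierstrassP_half_cube hω
  have hhalf : ω / 2 ∈ Ioc 0 (ω / 2) := ⟨by linarith, le_rfl⟩
  have hint := integral_Ioi_weierstrassP_hexPeriodPair hω hhalf
  have himage := image_re_weierstrassP_Ioo (L := hexPeriodPair ω hω.ne')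
    conj_mem_lattice_hexPeriodPair ofReal_notMem_lattice_hexPeriodPair hhalf
  set e := (℘[hexPeriodPair ω hω.ne'] (ω / 2 : ℝ)).re
  have hc : ((ϖ₀ / ω) ^ 2) ^ 3 = 4 * e ^ 3 := by
    rw [← hg₃, g₃_hexPeriodPair_re hω]
    ring
  have hec : e < (ϖ₀ / ω) ^ 2 :=
    (Odd.pow_lt_pow (n := 3) (by decide)).1 (by linarith [pow_pos he 3])
  obtain ⟨t, ht, htc⟩ := himage.ge hec
  have htint := integral_Ioi_weierstrassP_hexPeriodPair hω ⟨ht.1, ht.2.le⟩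
  rw [hg₃] at hint htint
  simp only at htc
  rw [htc, integral_Ioi_eq_two_thirds he hc, hint] at htint
  rw [show ω / 3 = t by linarith, ← ofReal_re_weierstrassP conj_mem_lattice_hexPeriodPair, htc]

end HexagonalLattice

/-- `℘(ϖ/3) = 1`; equivalently
`∫_1^∞ dx/√(4x³ − 1) = ϖ/3 = Γ(1/3)³/(6π)`. -/
theorem wp_at_third_of_period :
    wp ((ϖ₀ : ℂ) / 3) = 1 ∧
    (∫ x in Set.Ioi (1 : ℝ), 1 / Real.sqrt (4 * x ^ 3 - 1)) = ϖ₀ / 3 ∧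
    ϖ₀ / 3 = Real.Gamma (1 / 3) ^ 3 / (6 * Real.pi) := by
  have hϖ₀ := ϖ₀_pos
  have hthird : ℘[hexPeriodPair ϖ₀ hϖ₀.ne'] (ϖ₀ / 3 : ℝ) = 1 := by
    rw [weierstrassP_hexPeriodPair_third hϖ₀, div_self hϖ₀.ne', one_pow, ofReal_one]
  have hg₃ : (hexPeriodPair ϖ₀ hϖ₀.ne').g₃.re = 1 := by
    rw [g₃_hexPeriodPair_re hϖ₀, div_self hϖ₀.ne', one_pow]
  refine ⟨?_, ?_, ?_⟩
  · rw [wp_eq_weierstrassP, ← hthird, ofReal_div, ofReal_ofNat]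
  · have hint := integral_Ioi_weierstrassP_hexPeriodPair hϖ₀ (z := ϖ₀ / 3)
      ⟨by linarith, by linarith⟩
    rwa [hthird, one_re, hg₃] at hint
  · rw [ϖ₀]
    field_simp
    norm_num
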